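/- Let k ≥ 2 and n_1, …, n_k be positive integers, let t be the number of indices i with n_i odd, let I_1 = {i : n_i = 1}, and let I_2 = {i : n_i = 2}. If t is even, t ≥ 4, and |I_1| + |I_2| ≤ t/2, then the signed domination number of the complete k-partite graph K_{n_1,…,n_k} equals 4. -/

import Mathlib

open scoped Classical

/-- The signed domination number of a finite simple graph `G`: the minimum weight of a
function `f : V → {−1, 1}` such that `f(N[v]) ≥ 1` for every vertex `v`. -/
noncomputable def signedDomNum {V : Type*} [Fintype V] (G : SimpleGraph V) : ℤ :=
  sInf {w : ℤ | ∃ f : V → ℤ, (∀ v, f v = 1 ∨ f v = -1) ∧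
    (∀ v, 1 ≤ f v + ∑ u ∈ G.neighborFinset v, f u) ∧ w = ∑ v, f v}

/-! Let `W` be the weight of a signed dominating function `f` and `sᵢ` its sum over the part `Vᵢ`.
The closed neighborhood of `v ∈ Vᵢ` has sum `W - sᵢ + f v`, so every nonempty part satisfies either
`sᵢ ≤ W - 2`, or `sᵢ = |Vᵢ| ≤ W` with `f` constantly `1` on `Vᵢ`. This forces `W > 0`: otherwise
every nonempty part would have `sᵢ ≤ W - 2 < 0`, whence `W = ∑ sᵢ ≤ W - 2`. As `W` is even, `W < 4`
would mean `W = 2`; but then only parts of size at most `2` can have positive sum, every odd part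
of size at least `3` has `sᵢ ≤ -1`, and summing over the parts gives
`W ≤ 2 (|I₁| + |I₂|) - t ≤ 0`. Weight `4` is attained by giving the even parts sum `0` and the odd
parts sums `±1` that add up to `4`. -/

section

open Finset

variable {α : Type*} {S : Finset α}

theorem sum_eq_card_sub_two_mul_card_neg_one {f : α → ℤ} (hf : ∀ x ∈ S, f x = 1 ∨ f x = -1) :
    ∑ x ∈ S, f x = #S - 2 * #{x ∈ S | f x = -1} := by
  have hterm : ∀ x ∈ S, f x = 1 - 2 * if f x = -1 then 1 else 0 := fun x hx => by
    rcases hf x hx with h | h <;> simp [h]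
  rw [sum_congr rfl hterm, sum_sub_distrib, ← mul_sum, sum_boole]
  simp

theorem even_sum_iff_even_card {f : α → ℤ} (hf : ∀ x ∈ S, f x = 1 ∨ f x = -1) :
    Even (∑ x ∈ S, f x) ↔ Even #S := by
  rw [sum_eq_card_sub_two_mul_card_neg_one hf, Int.even_sub]
  simp

theorem exists_sum_eq_of_abs_le_card {m : ℤ} (hle : |m| ≤ #S) (heven : Even (#S - m)) :
    ∃ f : α → ℤ, (∀ x, f x = 1 ∨ f x = -1) ∧ ∑ x ∈ S, f x = m := by
  obtain ⟨r, hr⟩ := heven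
  rw [abs_le] at hle
  obtain ⟨A, hAS, hA⟩ := exists_subset_card_eq (s := S) (n := r.toNat) (by omega)
  have hsign (x : α) : (if x ∈ A then -1 else 1 : ℤ) = 1 ∨ (if x ∈ A then -1 else 1 : ℤ) = -1 := by
    split_ifs <;> simp
  have hneg : #{x ∈ S | (if x ∈ A then -1 else 1 : ℤ) = -1} = #A := by
    congr 1
    ext x
    by_cases hx : x ∈ A <;> simp [hx, @hAS x]
  refine ⟨fun x => if x ∈ A then -1 else 1, hsign, ?_⟩
  rw [sum_eq_card_sub_two_mul_card_neg_one fun x _ => hsign x, hneg]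
  omega

/-- A signed dominating function of `G`: a `±1`-valued function whose sum over every closed
neighborhood is positive. The values lie in `ℤ`, as in `signedDomNum`. -/
structure IsSignedDominating {V : Type*} [Fintype V] (G : SimpleGraph V) (f : V → ℤ) : Prop where
  eq_one_or_eq_neg_one : ∀ v, f v = 1 ∨ f v = -1
  one_le_sum_closedNeighborhood : ∀ v, 1 ≤ f v + ∑ u ∈ G.neighborFinset v, f u

theorem IsSignedDominating.signedDomNum_eq_of_forall_le {V : Type*} [Fintype V]
    {G : SimpleGraph V} {f : V → ℤ} (hf : IsSignedDominating G f)
    (hmin : ∀ g, IsSignedDominating G g → ∑ v, f v ≤ ∑ v, g v) :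
    signedDomNum G = ∑ v, f v := by
  refine IsLeast.csInf_eq ⟨⟨f, hf.1, hf.2, rfl⟩, ?_⟩
  rintro _ ⟨g, hsign, hdom, rfl⟩
  exact hmin g ⟨hsign, hdom⟩

variable {ι : Type*} [Fintype ι] {V : ι → Type*} [∀ i, Fintype (V i)]

theorem sum_neighborFinset_completeMultipartiteGraph {M : Type*} [AddCommGroup M]
    (f : (Σ i, V i) → M) (v : Σ i, V i)
    [Fintype ((SimpleGraph.completeMultipartiteGraph V).neighborSet v)] :
    ∑ u ∈ (SimpleGraph.completeMultipartiteGraph V).neighborFinset v, f u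
      = ∑ u, f u - ∑ x, f ⟨v.1, x⟩ := by
  have hneighbor : (SimpleGraph.completeMultipartiteGraph V).neighborFinset v
      = univ.filter fun u => ¬ u.1 = v.1 := by
    ext u
    simp [SimpleGraph.completeMultipartiteGraph, eq_comm]
  have hpart : ∑ u : (Σ i, V i) with u.1 = v.1, f u = ∑ x, f ⟨v.1, x⟩ := by
    rw [sum_filter, Fintype.sum_sigma, Fintype.sum_eq_single v.1 fun i hi => by simp [hi]]
    simp
  rw [hneighbor, ← hpart, eq_sub_iff_add_eq', sum_filter_add_sum_filter_not]

theorem isSignedDominating_completeMultipartiteGraph_iff {f : (Σ i, V i) → ℤ} :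
    IsSignedDominating (SimpleGraph.completeMultipartiteGraph V) f ↔
      (∀ v, f v = 1 ∨ f v = -1) ∧ ∀ v, ∑ x, f ⟨v.1, x⟩ < f v + ∑ u, f u := by
  refine ⟨fun ⟨hsign, hdom⟩ => ⟨hsign, fun v => ?_⟩, fun ⟨hsign, hdom⟩ => ⟨hsign, fun v => ?_⟩⟩
  · have hv := hdom v
    rw [sum_neighborFinset_completeMultipartiteGraph] at hv
    omega
  · have hv := hdom v
    rw [sum_neighborFinset_completeMultipartiteGraph]
    omega

namespace IsSignedDominating

variable {f : (Σ i, V i) → ℤ}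

theorem sum_part_le_sum (hf : IsSignedDominating (SimpleGraph.completeMultipartiteGraph V) f)
    (v : Σ i, V i) : ∑ x, f ⟨v.1, x⟩ ≤ ∑ u, f u := by
  obtain ⟨hsign, hdom⟩ := isSignedDominating_completeMultipartiteGraph_iff.1 hf
  have := hdom v
  rcases hsign v with h | h <;> omega

theorem sum_part_le_sum_sub_two_or_eq_card
    (hf : IsSignedDominating (SimpleGraph.completeMultipartiteGraph V) f) (i : ι) :
    ∑ x, f ⟨i, x⟩ ≤ ∑ u, f u - 2 ∨ ∑ x, f ⟨i, x⟩ = Fintype.card (V i) := by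
  obtain ⟨hsign, hdom⟩ := isSignedDominating_completeMultipartiteGraph_iff.1 hf
  by_cases hneg : ∃ x, f ⟨i, x⟩ = -1
  · obtain ⟨x, hx⟩ := hneg
    have : ∑ x, f ⟨i, x⟩ < f ⟨i, x⟩ + ∑ u, f u := hdom ⟨i, x⟩
    left
    omega
  · push Not at hneg
    right
    simp [fun x => (hsign ⟨i, x⟩).resolve_right (hneg x)]

theorem sum_pos [Nonempty (Σ i, V i)]
    (hf : IsSignedDominating (SimpleGraph.completeMultipartiteGraph V) f) : 0 < ∑ u, f u := by
  obtain ⟨v⟩ := ‹Nonempty (Σ i, V i)›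
  by_contra! hnonpos
  have hpart (i : ι) : ∑ x, f ⟨i, x⟩ ≤ 0 := by
    cases isEmpty_or_nonempty (V i) with
    | inl _ => simp
    | inr h => exact (hf.sum_part_le_sum ⟨i, h.some⟩).trans hnonpos
  have hle : ∑ u, f u ≤ ∑ x, f ⟨v.1, x⟩ := by
    rw [Fintype.sum_sigma, ← add_sum_erase univ _ (mem_univ v.1)]
    exact add_le_of_nonpos_right (sum_nonpos fun i _ => hpart i)
  have hcard : 0 < Fintype.card (V v.1) := Fintype.card_pos_iff.2 ⟨v.2⟩
  have := hpart v.1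
  rcases hf.sum_part_le_sum_sub_two_or_eq_card v.1 with h | h <;> omega

theorem even_sum_iff (hf : IsSignedDominating (SimpleGraph.completeMultipartiteGraph V) f) :
    Even (∑ u, f u) ↔ Even #{i | Odd (Fintype.card (V i))} := by
  rw [even_sum_iff_even_card fun v _ => hf.eq_one_or_eq_neg_one v, card_univ, Fintype.card_sigma,
    even_sum_iff_even_card_odd]

theorem sum_part_add_ite_odd_le
    (hf : IsSignedDominating (SimpleGraph.completeMultipartiteGraph V) f) (hle : ∑ u, f u ≤ 2)
    (i : ι) :
    (∑ x, f ⟨i, x⟩) + (if Odd (Fintype.card (V i)) then 1 else 0)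
      ≤ 2 * ((if Fintype.card (V i) = 1 then 1 else 0)
        + (if Fintype.card (V i) = 2 then 1 else 0)) := by
  have hsign (x : V i) (_ : x ∈ univ) := hf.eq_one_or_eq_neg_one ⟨i, x⟩
  have hcard : ∑ x, f ⟨i, x⟩ ≤ Fintype.card (V i) := by
    have := sum_eq_card_sub_two_mul_card_neg_one hsign
    rw [card_univ] at this
    omega
  have hlarge (h3 : 3 ≤ Fintype.card (V i)) : ∑ x, f ⟨i, x⟩ ≤ 0 := by
    obtain ⟨x⟩ := Fintype.card_pos_iff.1 (by omega : 0 < Fintype.card (V i))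
    have : ∑ x, f ⟨i, x⟩ ≤ ∑ u, f u := hf.sum_part_le_sum ⟨i, x⟩
    rcases hf.sum_part_le_sum_sub_two_or_eq_card i with h | h <;> omega
  have hparity := even_sum_iff_even_card hsign
  rw [card_univ] at hparity
  grind

theorem four_le_sum [Nonempty (Σ i, V i)]
    (hf : IsSignedDominating (SimpleGraph.completeMultipartiteGraph V) f)
    (heven : Even #{i | Odd (Fintype.card (V i))})
    (hsmall : 2 * (#{i | Fintype.card (V i) = 1} + #{i | Fintype.card (V i) = 2})
      ≤ #{i | Odd (Fintype.card (V i))}) :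
    4 ≤ ∑ u, f u := by
  by_contra! hlt
  obtain ⟨r, hr⟩ := hf.even_sum_iff.2 heven
  have hcount := sum_le_sum fun i (_ : i ∈ univ) => hf.sum_part_add_ite_odd_le (by omega) i
  rw [sum_add_distrib, ← mul_sum, sum_add_distrib, sum_boole, sum_boole, sum_boole] at hcount
  have hparts : ∑ u, f u = ∑ i, ∑ x, f ⟨i, x⟩ := Fintype.sum_sigma f
  have hpos := hf.sum_pos
  omega

end IsSignedDominating

theorem exists_isSignedDominating_sum_eq_four (heven : Even #{i | Odd (Fintype.card (V i))})
    (hfour : 4 ≤ #{i | Odd (Fintype.card (V i))}) :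
    ∃ f, IsSignedDominating (SimpleGraph.completeMultipartiteGraph V) f ∧ ∑ u, f u = 4 := by
  obtain ⟨s, hs, hsum⟩ := exists_sum_eq_of_abs_le_card (m := 4)
    (by rw [abs_of_pos four_pos]; exact_mod_cast hfour)
    (((Int.even_coe_nat _).2 heven).sub (by decide))
  have hpart (i : ι) : ∃ g : V i → ℤ, (∀ x, g x = 1 ∨ g x = -1) ∧
      ∑ x, g x = if Odd (Fintype.card (V i)) then s i else 0 := by
    refine exists_sum_eq_of_abs_le_card ?_ ?_
    · rw [card_univ]
      rcases hs i with h | h <;> grind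
    · rw [card_univ]
      rcases hs i with h | h <;> grind
  choose g hg hgsum using hpart
  have htotal : ∑ u : (Σ i, V i), g u.1 u.2 = 4 := by
    rw [Fintype.sum_sigma, ← hsum, sum_filter]
    exact sum_congr rfl fun i _ => hgsum i
  refine ⟨fun u => g u.1 u.2,
    isSignedDominating_completeMultipartiteGraph_iff.2 ⟨fun u => hg u.1 u.2, fun u => ?_⟩, htotal⟩
  have hle : ∑ x, g u.1 x ≤ 1 := by
    rw [hgsum]
    rcases hs u.1 with h | h <;> grind
  rw [htotal]
  rcases hg u.1 u.2 with h | h <;> grind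

variable (V) in
theorem signedDomNum_eq_four_t_ge_four_general
    (heven : Even #{i | Odd (Fintype.card (V i))})
    (hfour : 4 ≤ #{i | Odd (Fintype.card (V i))})
    (hsmall : 2 * (#{i | Fintype.card (V i) = 1} + #{i | Fintype.card (V i) = 2})
      ≤ #{i | Odd (Fintype.card (V i))}) :
    signedDomNum (SimpleGraph.completeMultipartiteGraph V) = 4 := by
  obtain ⟨f, hf, hsum⟩ := exists_isSignedDominating_sum_eq_four heven hfour
  have : Nonempty (Σ i, V i) := by
    by_contra hempty
    rw [not_nonempty_iff] at hempty
    simp at hsum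
  rw [← hsum]
  exact hf.signedDomNum_eq_of_forall_le fun g hg => hsum.trans_le (hg.four_le_sum heven hsmall)

end

theorem signedDomNum_eq_four_t_ge_four
    (k : ℕ) (hk : 2 ≤ k) (n : Fin k → ℕ) (hn : ∀ i, 0 < n i)
    (t : ℕ) (ht : t = (Finset.univ.filter fun i => Odd (n i)).card)
    (hteven : Even t) (ht4 : 4 ≤ t)
    (hI : 2 * ((Finset.univ.filter fun i => n i = 1).card
      + (Finset.univ.filter fun i => n i = 2).card) ≤ t) :
    signedDomNum (SimpleGraph.completeMultipartiteGraph fun i : Fin k => Fin (n i)) = 4 := by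
  subst ht
  apply signedDomNum_eq_four_t_ge_four_general (fun i => Fin (n i)) <;>
    simpa only [Fintype.card_fin]
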